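/- Let η : Fin 4 → Fin 4 → ℝ be the Minkowski metric (η μ ν = 0 for μ ≠ ν, η 0 0 = 1, η k k = −1 for k = 1,2,3), let γ : Fin 4 → Matrix (Fin 4) (Fin 4) ℂ satisfy the Clifford relations γ μ * γ ν + γ ν * γ μ = (2 * η μ ν : ℂ) • 1 for all μ, ν, define σ μ ν := (Complex.I/2) • (γ μ * γ ν − γ ν * γ μ), σ' μ ν := (η μ μ * η ν ν : ℂ) • σ μ ν, τ μ ν := (1/3 : ℂ) • ((2 * Complex.I * η μ ν : ℂ) • 1 − σ' μ ν), and the lowered matrices γ' μ := (η μ μ : ℂ) • γ μ. Let m be a real number. Then for all row vectors ψ̄, π̄_α : Fin 4 → ℂ (α ∈ Fin 4) and column vectors ψ, π_β : Fin 4 → ℂ (β ∈ Fin 4), with ⟨r, M, v⟩ := ∑_{j,k} r j * M j k * v k and r ⬝ v := ∑_j r j * v j: ∑_{α,β} ⟨ π̄_α − (Complex.I/2) • (ψ̄ ᵥ* γ α), (Complex.I*m) • τ α β, π_β + (Complex.I/2) • ((γ β).mulVec ψ) ⟩ + m * (ψ̄ ⬝ ψ) = Complex.I*m * ( ∑_{α,β}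 ⟨π̄_α, τ α β, π_β⟩ + (1/6) * ∑_α ⟨π̄_α, γ' α, ψ⟩ − (1/6) * ∑_β ⟨ψ̄, γ' β, π_β⟩ ) + (4*m/3) * (ψ̄ ⬝ ψ). -/

import Mathlib

open Matrix

/-- The scalar `u ⬝ M ⬝ v = ∑_{j,k} u j * M j k * v k`. -/
noncomputable def triple (u : Fin 4 → ℂ) (M : Matrix (Fin 4) (Fin 4) ℂ) (v : Fin 4 → ℂ) : ℂ :=
  ∑ j : Fin 4, ∑ k : Fin 4, u j * M j k * v k

/-- The scalar `u ⬝ v = ∑_j u j * v j`. -/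
noncomputable def dotc (u v : Fin 4 → ℂ) : ℂ := ∑ j : Fin 4, u j * v j

/-!
The matrices `γ^α` and their lowered versions `γ_β` satisfy `γ^α γ_β + γ_β γ^α = 2 δ^α_β` and
`γ^α γ_α = d`. Moving `γ^α` past `γ_β` then gives `γ^α [γ_α, γ_β] = 2 (d - 1) γ_β`, so contracting
`τ_{αβ}` with `γ` on either side returns a multiple of the lowered matrix. These contractions
evaluate the two cross terms and the `ψ̄ ψ` term of the expanded product.
-/

section ReciprocalFamily

variable {ι A : Type*} [Fintype ι] [DecidableEq ι] [Ring A]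

/-- The algebraic relations between Clifford generators `γ^α` and their lowered versions `γ_α`,
here `γ'`, that make the contraction identities work: they anticommute up to twice the Kronecker
delta, and their contraction is the dimension. The second relation does not follow from the first,
which is blind to the order of the factors. -/
structure IsReciprocalFamily (γ γ' : ι → A) : Prop where
  anticomm : ∀ α β, γ α * γ' β + γ' β * γ α = if α = β then 2 else 0
  sum_mul : ∑ α, γ α * γ' α = Fintype.card ι

namespace IsReciprocalFamily

variable {γ γ' : ι → A}

theorem sum_mul_swap (h : IsReciprocalFamily γ γ') : ∑ α, γ' α * γ α = Fintype.card ι := by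
  have h_total : ∑ α, γ α * γ' α + ∑ α, γ' α * γ α = Fintype.card ι + Fintype.card ι := by
    simp only [← Finset.sum_add_distrib, h.anticomm, if_true, Finset.sum_const, Finset.card_univ,
      nsmul_eq_mul, mul_two]
  rw [h.sum_mul] at h_total
  exact add_left_cancel h_total

theorem sum_mul_commutator (h : IsReciprocalFamily γ γ') (β : ι) :
    ∑ α, γ α * (γ' α * γ' β - γ' β * γ' α) = (2 * (Fintype.card ι - 1) : ℤ) • γ' β := by
  have h_move (α : ι) : γ α * (γ' α * γ' β - γ' β * γ' α) =
      γ α * γ' α * γ' β + γ' β * (γ α * γ' α) - (if α = β then 2 else 0) * γ' α := by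
    rw [← h.anticomm]
    noncomm_ring
  simp only [h_move, Finset.sum_sub_distrib, Finset.sum_add_distrib, ← Finset.sum_mul,
    ← Finset.mul_sum, h.sum_mul, ite_mul, zero_mul, Finset.sum_ite_eq', Finset.mem_univ, if_true]
  rw [← Nat.cast_comm, zsmul_eq_mul]
  push_cast
  noncomm_ring

theorem sum_commutator_mul (h : IsReciprocalFamily γ γ') (α : ι) :
    ∑ β, (γ' α * γ' β - γ' β * γ' α) * γ β = (2 * (Fintype.card ι - 1) : ℤ) • γ' α := by
  have h_move (β : ι) : (γ' α * γ' β - γ' β * γ' α) * γ β =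
      γ' α * (γ' β * γ β) + γ' β * γ β * γ' α - γ' β * (if β = α then 2 else 0) := by
    rw [← h.anticomm]
    noncomm_ring
  simp only [h_move, Finset.sum_sub_distrib, Finset.sum_add_distrib, ← Finset.sum_mul,
    ← Finset.mul_sum, h.sum_mul_swap, mul_ite, mul_zero, Finset.sum_ite_eq', Finset.mem_univ,
    if_true]
  rw [← Nat.cast_comm, zsmul_eq_mul]
  push_cast
  noncomm_ring

end IsReciprocalFamily

end ReciprocalFamily

section CliffordContractions

variable {ι A : Type*} [Ring A] [Algebra ℂ A]

/-- The spin tensor `σ_{μν} = (i/2) [γ_μ, γ_ν]`, taken in the generators it is given: raised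
generators `γ^μ` yield `σ^{μν}`, and the lowered ones yield `σ_{μν}`. -/
noncomputable def spinTensor (γ : ι → A) (μ ν : ι) : A :=
  (Complex.I / 2) • (γ μ * γ ν - γ ν * γ μ)

theorem spinTensor_smul (a : ι → ℂ) (γ : ι → A) (μ ν : ι) :
    spinTensor (fun μ => a μ • γ μ) μ ν = (a μ * a ν) • spinTensor γ μ ν := by
  simp only [spinTensor, smul_mul_smul_comm]
  module

variable [Fintype ι]

/-- The lowered generators `γ_μ = g_{μν} γ^ν`. -/
def lowerIndex (g : Matrix ι ι ℂ) (γ : ι → A) (μ : ι) : A := ∑ ν, g μ ν • γ ν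

/-- The tensor `τ_{μν} = c (t i g_{μν} - σ_{μν})` coupling the momenta in the Dirac Hamiltonian. The
four-dimensional theory has `c = 1/3` and `t = 2`. -/
noncomputable def diracTau (c t : ℂ) (g : Matrix ι ι ℂ) (γ : ι → A) (μ ν : ι) : A :=
  c • ((t * Complex.I * g μ ν) • 1 - spinTensor (lowerIndex g γ) μ ν)

variable [DecidableEq ι]

theorem lowerIndex_diagonal (a : ι → ℂ) (γ : ι → A) :
    lowerIndex (diagonal a) γ = fun μ => a μ • γ μ := by
  ext μ
  simp [lowerIndex, diagonal_apply, ite_smul]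

theorem diracTau_diagonal (c t : ℂ) (a : ι → ℂ) (γ : ι → A) (μ ν : ι) :
    diracTau c t (diagonal a) γ μ ν =
      c • ((t * Complex.I * diagonal a μ ν) • 1 - (a μ * a ν) • spinTensor γ μ ν) := by
  rw [diracTau, lowerIndex_diagonal, spinTensor_smul]

variable {g : Matrix ι ι ℂ} {γ : ι → A}

theorem mul_lowerIndex_add_lowerIndex_mul (hg : g.IsSymm) (hdet : IsUnit g.det)
    (hγ : ∀ μ ν, γ μ * γ ν + γ ν * γ μ = (2 * g⁻¹ μ ν) • 1) (α β : ι) :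
    γ α * lowerIndex g γ β + lowerIndex g γ β * γ α = if α = β then 2 else 0 := by
  calc γ α * lowerIndex g γ β + lowerIndex g γ β * γ α
      = ∑ ν, g β ν • (γ α * γ ν + γ ν * γ α) := by
        simp only [lowerIndex, Finset.mul_sum, Finset.sum_mul, mul_smul_comm, smul_mul_assoc,
          smul_add, Finset.sum_add_distrib]
    _ = (2 * (g⁻¹ * g) α β) • 1 := by
        simp only [hγ, smul_smul, ← Finset.sum_smul, mul_apply, Finset.mul_sum, hg.apply β]
        congr! 2
        ring
    _ = if α = β then 2 else 0 := by
        rw [nonsing_inv_mul g hdet, one_apply]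
        split_ifs <;> simp [ofNat_smul_eq_nsmul]

theorem isReciprocalFamily_lowerIndex (hg : g.IsSymm) (hdet : IsUnit g.det)
    (hγ : ∀ μ ν, γ μ * γ ν + γ ν * γ μ = (2 * g⁻¹ μ ν) • 1) :
    IsReciprocalFamily γ (lowerIndex g γ) where
  anticomm := mul_lowerIndex_add_lowerIndex_mul hg hdet hγ
  sum_mul := by
    have h_swap : ∑ α, lowerIndex g γ α * γ α = ∑ α, γ α * lowerIndex g γ α := by
      simp only [lowerIndex, Finset.mul_sum, Finset.sum_mul, mul_smul_comm, smul_mul_assoc]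
      rw [Finset.sum_comm]
      simp only [hg.apply]
    have h_double : (2 : ℂ) • ∑ α, γ α * lowerIndex g γ α = (2 : ℂ) • (Fintype.card ι : A) := by
      rw [two_smul]
      nth_rw 2 [← h_swap]
      simp [← Finset.sum_add_distrib, mul_lowerIndex_add_lowerIndex_mul hg hdet hγ, two_smul,
        mul_two]
    exact smul_right_injective A two_ne_zero h_double

theorem sum_mul_diracTau (c t : ℂ) (hg : g.IsSymm) (hγ : IsReciprocalFamily γ (lowerIndex g γ))
    (β : ι) :
    ∑ α, γ α * diracTau c t g γ α β =
      (c * (t - (Fintype.card ι - 1)) * Complex.I) • lowerIndex g γ β := by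
  have h_metric : ∑ α, g α β • γ α = lowerIndex g γ β := by simp only [lowerIndex, hg.apply]
  have h_spin : ∑ α, γ α * spinTensor (lowerIndex g γ) α β =
      ((Fintype.card ι - 1) * Complex.I) • lowerIndex g γ β := by
    simp only [spinTensor, mul_smul_comm, ← Finset.smul_sum, hγ.sum_mul_commutator,
      ← Int.cast_smul_eq_zsmul ℂ, smul_smul]
    push_cast
    ring_nf
  simp only [diracTau, mul_smul_comm, mul_sub, mul_one, ← Finset.smul_sum, Finset.sum_sub_distrib,
    h_spin, mul_smul _ (g _ _), h_metric]
  module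

theorem sum_diracTau_mul (c t : ℂ) (hγ : IsReciprocalFamily γ (lowerIndex g γ)) (α : ι) :
    ∑ β, diracTau c t g γ α β * γ β =
      (c * (t - (Fintype.card ι - 1)) * Complex.I) • lowerIndex g γ α := by
  have h_metric : ∑ β, g α β • γ β = lowerIndex g γ α := rfl
  have h_spin : ∑ β, spinTensor (lowerIndex g γ) α β * γ β =
      ((Fintype.card ι - 1) * Complex.I) • lowerIndex g γ α := by
    simp only [spinTensor, smul_mul_assoc, ← Finset.smul_sum, hγ.sum_commutator_mul,
      ← Int.cast_smul_eq_zsmul ℂ, smul_smul]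
    push_cast
    ring_nf
  simp only [diracTau, smul_mul_assoc, sub_mul, one_mul, ← Finset.smul_sum, Finset.sum_sub_distrib,
    h_spin, mul_smul _ (g _ _), h_metric]
  module

end CliffordContractions

section Expansion

variable {n R : Type*} [Fintype n] [CommRing R]

theorem shifted_dotProduct_mulVec_shifted {k l m : Type*} [Fintype k] [Fintype l] [Fintype m]
    (a : R) (A : Matrix k l R) (T : Matrix l m R) (B : Matrix m n R)
    (p : l → R) (q : m → R) (s : k → R) (v : n → R) :
    (p - a • (s ᵥ* A)) ⬝ᵥ T *ᵥ (q + a • (B *ᵥ v)) =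
      p ⬝ᵥ T *ᵥ q + a * (p ⬝ᵥ (T * B) *ᵥ v) - a * (s ⬝ᵥ (A * T) *ᵥ q)
        - a ^ 2 * (s ⬝ᵥ (A * T * B) *ᵥ v) := by
  simp only [sub_dotProduct, mulVec_add, mulVec_smul, dotProduct_add, dotProduct_smul,
    smul_dotProduct, smul_eq_mul, ← dotProduct_mulVec, mulVec_mulVec, Matrix.mul_assoc]
  ring

theorem sum_shifted_dotProduct_mulVec_shifted {ι : Type*} [Fintype ι] [DecidableEq ι]
    [DecidableEq n] {γ γ' : ι → Matrix n n R} {T : ι → ι → Matrix n n R} {k : R}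
    (hγ : IsReciprocalFamily γ γ')
    (h_left : ∀ β, ∑ α, γ α * T α β = k • γ' β) (h_right : ∀ α, ∑ β, T α β * γ β = k • γ' α)
    (a : R) (p q : ι → n → R) (s v : n → R) :
    ∑ α, ∑ β, (p α - a • (s ᵥ* γ α)) ⬝ᵥ T α β *ᵥ (q β + a • (γ β *ᵥ v)) =
      ∑ α, ∑ β, p α ⬝ᵥ T α β *ᵥ q β + a * k * ∑ α, p α ⬝ᵥ γ' α *ᵥ v
        - a * k * ∑ β, s ⬝ᵥ γ' β *ᵥ q β - a ^ 2 * k * Fintype.card ι * (s ⬝ᵥ v) := by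
  have h_pγ : ∑ α, ∑ β, p α ⬝ᵥ (T α β * γ β) *ᵥ v = k * ∑ α, p α ⬝ᵥ γ' α *ᵥ v := by
    simp only [← dotProduct_sum, ← sum_mulVec, h_right, smul_mulVec, dotProduct_smul, smul_eq_mul,
      Finset.mul_sum]
  have h_γq : ∑ α, ∑ β, s ⬝ᵥ (γ α * T α β) *ᵥ q β = k * ∑ β, s ⬝ᵥ γ' β *ᵥ q β := by
    rw [Finset.sum_comm, Finset.mul_sum]
    refine Finset.sum_congr rfl fun β _ => ?_
    rw [← dotProduct_sum, ← sum_mulVec, h_left, smul_mulVec, dotProduct_smul, smul_eq_mul]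
  have h_both : ∑ α, ∑ β, γ α * T α β * γ β = (k * Fintype.card ι) • 1 := by
    rw [Finset.sum_comm]
    simp only [← Finset.sum_mul, h_left, smul_mul_assoc, ← Finset.smul_sum, hγ.sum_mul_swap,
      mul_smul, Nat.cast_smul_eq_nsmul, nsmul_one]
  have h_γγ : ∑ α, ∑ β, s ⬝ᵥ (γ α * T α β * γ β) *ᵥ v = k * Fintype.card ι * (s ⬝ᵥ v) := by
    simp only [← dotProduct_sum, ← sum_mulVec, h_both, smul_mulVec, one_mulVec, dotProduct_smul,
      smul_eq_mul]
  simp only [shifted_dotProduct_mulVec_shifted, Finset.sum_sub_distrib, Finset.sum_add_distrib,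
    ← Finset.mul_sum, h_pγ, h_γq, h_γγ]
  ring

end Expansion

theorem dirac_hamiltonian_expansion_general {ι n : Type*} [Fintype ι] [DecidableEq ι] [Fintype n]
    [DecidableEq n] {g : Matrix ι ι ℂ} (hg : g.IsSymm) (hdet : IsUnit g.det)
    {γ : ι → Matrix n n ℂ} (hγ : ∀ μ ν, γ μ * γ ν + γ ν * γ μ = (2 * g⁻¹ μ ν) • 1)
    (c t m : ℂ) (ψb ψ : n → ℂ) (πb π : ι → n → ℂ) :
    (∑ α, ∑ β, (πb α - (Complex.I / 2) • (ψb ᵥ* γ α)) ⬝ᵥ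
        ((Complex.I * m) • diracTau c t g γ α β) *ᵥ (π β + (Complex.I / 2) • (γ β *ᵥ ψ)))
      + m * (ψb ⬝ᵥ ψ) =
    Complex.I * m *
        (∑ α, ∑ β, πb α ⬝ᵥ diracTau c t g γ α β *ᵥ π β
          + c * (Fintype.card ι - 1 - t) / 2 * ∑ α, πb α ⬝ᵥ lowerIndex g γ α *ᵥ ψ
          - c * (Fintype.card ι - 1 - t) / 2 * ∑ β, ψb ⬝ᵥ lowerIndex g γ β *ᵥ π β)
      + m * (1 + Fintype.card ι * (c * (Fintype.card ι - 1 - t)) / 4) * (ψb ⬝ᵥ ψ) := by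
  have hrec := isReciprocalFamily_lowerIndex hg hdet hγ
  simp only [smul_mulVec, dotProduct_smul, smul_eq_mul, ← Finset.mul_sum]
  rw [sum_shifted_dotProduct_mulVec_shifted hrec (sum_mul_diracTau c t hg hrec)
    (sum_diracTau_mul c t hrec)]
  linear_combination
    Complex.I * m * (c * (t - (Fintype.card ι - 1))) / 2 *
        (∑ α, πb α ⬝ᵥ lowerIndex g γ α *ᵥ ψ - ∑ β, ψb ⬝ᵥ lowerIndex g γ β *ᵥ π β) * Complex.I_sq
      - m * (c * (t - (Fintype.card ι - 1))) * Fintype.card ι / 4 * (ψb ⬝ᵥ ψ) *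
        Complex.I_pow_four

theorem triple_eq_dotProduct_mulVec (u : Fin 4 → ℂ) (M : Matrix (Fin 4) (Fin 4) ℂ)
    (v : Fin 4 → ℂ) : triple u M v = u ⬝ᵥ M *ᵥ v := by
  simp only [triple, dotProduct, mulVec, Finset.mul_sum, mul_assoc]

theorem dotc_eq_dotProduct (u v : Fin 4 → ℂ) : dotc u v = u ⬝ᵥ v := rfl

/-- Algebraic identity expanding the covariant Dirac Hamiltonian density:
`(π̄^α − (i/2) ψ̄ γ^α) i m τ_{αβ} (π^β + (i/2) γ^β ψ) + m ψ̄ ψ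
 = i m (π̄^α τ_{αβ} π^β + (1/6) π̄^α γ_α ψ − (1/6) ψ̄ γ_β π^β) + (4/3) m ψ̄ ψ`. -/
theorem dirac_hamiltonian_expansion
    (η : Fin 4 → Fin 4 → ℝ)
    (hη_off : ∀ μ ν, μ ≠ ν → η μ ν = 0)
    (hη_00 : η 0 0 = 1)
    (hη_kk : ∀ k : Fin 4, k ≠ 0 → η k k = -1)
    (γ : Fin 4 → Matrix (Fin 4) (Fin 4) ℂ)
    (hγ : ∀ μ ν, γ μ * γ ν + γ ν * γ μ = (2 * (η μ ν : ℂ)) • 1)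
    (σ : Fin 4 → Fin 4 → Matrix (Fin 4) (Fin 4) ℂ)
    (hσ : ∀ μ ν, σ μ ν = (Complex.I / 2) • (γ μ * γ ν - γ ν * γ μ))
    (σ' : Fin 4 → Fin 4 → Matrix (Fin 4) (Fin 4) ℂ)
    (hσ' : ∀ μ ν, σ' μ ν = ((η μ μ * η ν ν : ℝ) : ℂ) • σ μ ν)
    (τ : Fin 4 → Fin 4 → Matrix (Fin 4) (Fin 4) ℂ)
    (hτ : ∀ μ ν, τ μ ν = (1/3 : ℂ) • ((2 * Complex.I * (η μ ν : ℂ)) • 1 - σ' μ ν))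
    (γ' : Fin 4 → Matrix (Fin 4) (Fin 4) ℂ)
    (hγ' : ∀ μ, γ' μ = ((η μ μ : ℂ)) • γ μ)
    (m : ℝ)
    (ψb ψ : Fin 4 → ℂ) (πb π : Fin 4 → (Fin 4 → ℂ)) :
    (∑ α : Fin 4, ∑ β : Fin 4,
        triple (πb α - (Complex.I / 2) • (ψb ᵥ* γ α))
               ((Complex.I * (m : ℂ)) • τ α β)
               (π β + (Complex.I / 2) • ((γ β).mulVec ψ)))
      + (m : ℂ) * dotc ψb ψ
    = Complex.I * (m : ℂ) *
        ((∑ α : Fin 4, ∑ β : Fin 4, triple (πb α) (τ α β) (π β))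
          + (1/6 : ℂ) * (∑ α : Fin 4, triple (πb α) (γ' α) ψ)
          - (1/6 : ℂ) * (∑ β : Fin 4, triple ψb (γ' β) (π β)))
      + (4 * (m : ℂ) / 3) * dotc ψb ψ := by
  have hsq (μ : Fin 4) : (η μ μ : ℂ) * η μ μ = 1 := by
    by_cases h : μ = 0 <;> simp [h, hη_00, hη_kk]
  set g : Matrix (Fin 4) (Fin 4) ℂ := diagonal fun μ => (η μ μ : ℂ) with hg
  have hηg (μ ν : Fin 4) : (η μ ν : ℂ) = g μ ν := by
    by_cases h : μ = ν <;> simp [hg, h, hη_off]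
  have hgg : g * g = 1 := by simp only [hg, diagonal_mul_diagonal, hsq, diagonal_one]
  have hτg : τ = diracTau (1 / 3) 2 g γ := by
    ext1 μ; ext1 ν
    rw [hτ, hσ', hσ, hηg, hg, diracTau_diagonal, spinTensor, Complex.ofReal_mul]
  have hγ'g : γ' = lowerIndex g γ := by rw [hg, lowerIndex_diagonal]; exact funext hγ'
  have hclifford (μ ν : Fin 4) : γ μ * γ ν + γ ν * γ μ = (2 * g⁻¹ μ ν) • 1 := by
    rw [hγ, hηg, inv_eq_right_inv hgg]
  have h_expansion := dirac_hamiltonian_expansion_general (g := g) (isSymm_diagonal _)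
    (isUnit_det_of_right_inverse hgg) hclifford (1 / 3) 2 m ψb ψ πb π
  simp only [triple_eq_dotProduct_mulVec, dotc_eq_dotProduct, hτg, hγ'g]
  rw [h_expansion, Fintype.card_fin]
  push_cast
  ring
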